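/- Let k = k(n) → ∞ with k = o(n), let (w_i)_{i∈[n]} satisfy Assumption 1 and the community weights satisfy Assumption 2, with parameters τ ∈ (2,3), C, w_0 > 0, γ ∈ (1,∞), d ≥ 1. Under the alternative model H₁, the expected weighted triangle statistic satisfies E₁[W] = Ω(k) as n → ∞; in particular E₁[W] ≥ (w_0²/(μ k))² · Σ_{{a,b,c} ⊂ V_C} 1/(w_a w_b w_c) · (1/(1+C₁))³ = Θ(k). -/

import Mathlib

open MeasureTheory ProbabilityTheory Filter Finset Asymptotics
open scoped Topology ENNReal NNReal Classical

noncomputable section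

/-- The torus distance on `[0,1]^d`:
`‖x - y‖ = sup_i min (|x i - y i|) (1 - |x i - y i|)`. -/
def torusDist (d : ℕ) (x y : Fin d → ℝ) : ℝ :=
  ⨆ i : Fin d, min |x i - y i| (1 - |x i - y i|)

/-- The uniform probability measure on `[0,1]`. -/
def unifI : Measure ℝ := volume.restrict (Set.Icc 0 1)

/-- The uniform probability measure on the cube `[0,1]^d`. -/
def unifCube (d : ℕ) : Measure (Fin d → ℝ) := volume.restrict (Set.Icc 0 1)

/-- Assumption 1: the empirical weight distribution has a power-law tail,
`1 - F_n(x) = C x^(1-τ) (1 + o(1))` uniformly for `w0 ≤ x ≤ n^(1/(τ-1)) / log n`. -/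
def Assumption1 (τ C w0 : ℝ) (w : (n : ℕ) → Fin n → ℝ) : Prop :=
  ∀ ε > (0:ℝ), ∃ N : ℕ, ∀ n ≥ N, ∀ x : ℝ, w0 ≤ x →
    x ≤ (n : ℝ) ^ ((1:ℝ) / (τ - 1)) / Real.log n →
    |((univ.filter fun i : Fin n => x < w n i).card : ℝ) / n - C * x ^ (1 - τ)|
      ≤ ε * (C * x ^ (1 - τ))

/-- Assumption 2: the empirical distribution of the community weights has a power-law tail,
`1 - F_k(x) = C x^(1-τ) (1 + o(1))` for `w0 ≤ x = O(k^(1/(τ-1)) / log k)`.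
The community consists of the vertices `i` with `i.val < k n`. -/
def Assumption2 (τ C w0 : ℝ) (k : ℕ → ℕ) (w : (n : ℕ) → Fin n → ℝ) : Prop :=
  ∀ A > (0:ℝ), ∀ ε > (0:ℝ), ∃ N : ℕ, ∀ n ≥ N, ∀ x : ℝ, w0 ≤ x →
    x ≤ A * (k n : ℝ) ^ ((1:ℝ) / (τ - 1)) / Real.log (k n) →
    |((univ.filter fun i : Fin n => i.val < k n ∧ x < w n i).card : ℝ) / (k n)
      - C * x ^ (1 - τ)| ≤ ε * (C * x ^ (1 - τ))

/-- `μ = E[X] = C (τ-1)/(τ-2) w₀^(2-τ)`, the mean of the Pareto distribution. -/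
def muPar (τ C w0 : ℝ) : ℝ := C * (τ - 1) / (τ - 2) * w0 ^ (2 - τ)

/-- IRG connection probability `p_{ij} = min (w_i w_j / (μ n)) 1`. -/
def pIRG (n : ℕ) (μ : ℝ) (w : Fin n → ℝ) (i j : Fin n) : ℝ :=
  min (w i * w j / (μ * n)) 1

/-- The correction constant `C₁ = (1 + (γ-1)⁻¹) 2^d`. -/
def C1 (d : ℕ) (γ : ℝ) : ℝ := (1 + (γ - 1)⁻¹) * 2 ^ d

/-- The geometric (GIRG) connection probability
`min (w_i w_j / (μ k ‖x-y‖^d)) 1 ^ γ` (without the correction factor). -/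
def pGIRG (k d : ℕ) (γ μ wi wj : ℝ) (x y : Fin d → ℝ) : ℝ :=
  (min (wi * wj / (μ * k * torusDist d x y ^ d)) 1) ^ γ

/-- The connection probability under the alternative model `H₁`: type-B vertices are the
vertices `i` with `i.val < k`; two type-B vertices use the geometric rule, any other pair
uses the IRG rule; both carry the correction factor `(1 + C₁)⁻¹`. -/
def pH1 (n k d : ℕ) (γ μ : ℝ) (w : Fin n → ℝ) (pos : Fin n → Fin d → ℝ) (i j : Fin n) : ℝ :=
  if i.val < k ∧ j.val < k then
    (1 + C1 d γ)⁻¹ * pGIRG k d γ μ (w i) (w j) (pos i) (pos j)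
  else (1 + C1 d γ)⁻¹ * pIRG n μ w i j

/-- Sample space of the alternative model: a uniform position on the torus for every vertex
(only those of the community members are used) and an independent uniform `[0,1]` variable
for every pair of vertices, generating the conditionally independent edge indicators. -/
abbrev H1Space (n d : ℕ) := (Fin n → Fin d → ℝ) × (Fin n → Fin n → ℝ)

/-- The law `P₁` of the alternative model (positions and edge-generating uniforms). -/
def H1Measure (n d : ℕ) : Measure (H1Space n d) :=
  (Measure.pi fun _ : Fin n => unifCube d).prod
    (Measure.pi fun _ : Fin n => Measure.pi fun _ : Fin n => unifI)

/-- Under `H₁`, the edge `{i,j}` is present iff the uniform variable attached to the pair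
`{i,j}` is at most `p_{ij}` (which depends on the positions); no self-loops. -/
def edgeH1 (n k d : ℕ) (γ μ : ℝ) (w : Fin n → ℝ) (ω : H1Space n d) (i j : Fin n) : Prop :=
  i ≠ j ∧ ω.2 (min i j) (max i j) ≤ pH1 n k d γ μ w ω.1 i j

def triH1 (n k d : ℕ) (γ μ : ℝ) (w : Fin n → ℝ) (ω : H1Space n d) (a b c : Fin n) : Prop :=
  edgeH1 n k d γ μ w ω a b ∧ edgeH1 n k d γ μ w ω b c ∧ edgeH1 n k d γ μ w ω c a

/-- The weighted triangle statistic under `H₁`. -/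
def WH1 (n k d : ℕ) (γ μ : ℝ) (w : Fin n → ℝ) (ω : H1Space n d) : ℝ :=
  ∑ a : Fin n, ∑ b : Fin n, ∑ c : Fin n,
    if triH1 n k d γ μ w ω a b c then (w a * w b * w c)⁻¹ else 0

/-- The local weighted triangle statistic
`W(a) = (n / w_a²) Σ_{b,c} (w_b w_c)⁻¹ 1{a,b,c triangle}`. -/
def WlocH1 (n k d : ℕ) (γ μ : ℝ) (w : Fin n → ℝ) (a : Fin n) (ω : H1Space n d) : ℝ :=
  ((n : ℝ) / w a ^ 2) * ∑ b : Fin n, ∑ c : Fin n,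
    if triH1 n k d γ μ w ω a b c then (w b * w c)⁻¹ else 0

/-! The lower bound comes from tight clusters inside the community. Cut the cube into grid cells of
volume `m⁻ᵈ ≈ w₀² / (μ k)`. Three community vertices in the same cell are so close that each pair
connects with the maximal probability `q = (1 + C₁)⁻¹`, and this happens with probability of order
`m⁻²ᵈ ≈ (w₀² / (μ k))²`. By the power law, at least half of the community has weight at most
some constant `M`, so about `k³` triples contribute `M⁻³` times this probability, a total of order
`k³ · k⁻² = k`.

The three vertices are placed in distinct subcells of the common cell, since at distance zero
`pGIRG` takes the junk value `min (x / 0) 1 ^ γ = 0`. -/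

section RealAndCounting

lemma tendsto_rpow_div_log_atTop {s : ℝ} (hs : 0 < s) :
    Tendsto (fun x : ℝ => x ^ s / Real.log x) atTop atTop := by
  have hinv : Tendsto (fun x : ℝ => Real.log x / x ^ s) atTop (𝓝[>] 0) := by
    refine tendsto_nhdsWithin_iff.2 ⟨(isLittleO_log_rpow_atTop hs).tendsto_div_nhds_zero, ?_⟩
    filter_upwards [eventually_gt_atTop 1] with x hx
    exact div_pos (Real.log_pos hx) (Real.rpow_pos_of_pos (by linarith) s)
  simpa only [Pi.inv_def, inv_div] using hinv.inv_tendsto_nhdsGT_zero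

lemma exists_natCast_pow_mem_Icc {d : ℕ} (hd : d ≠ 0) {t : ℝ} (ht : 1 ≤ t) :
    ∃ m : ℕ, (m : ℝ) ^ d ∈ Set.Icc t (2 ^ d * t) := by
  have hroot : (t ^ (d : ℝ)⁻¹) ^ d = t := Real.rpow_inv_natCast_pow (by linarith) hd
  have hone : 1 ≤ t ^ (d : ℝ)⁻¹ := Real.one_le_rpow ht (by positivity)
  refine ⟨⌈t ^ (d : ℝ)⁻¹⌉₊, ?_, ?_⟩
  · conv_lhs => rw [← hroot]
    gcongr
    exact Nat.le_ceil _
  · conv_rhs => rw [← hroot, ← mul_pow]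
    gcongr
    linarith [Nat.ceil_lt_add_one (zero_le_one.trans hone)]

lemma div_four_pow_three_le_descFactorial {x : ℝ} {N : ℕ} (hx : 8 ≤ x) (hN : x / 2 ≤ N) :
    (x / 4) ^ 3 ≤ (N.descFactorial 3 : ℝ) := by
  have hN2 : 2 ≤ N := by exact_mod_cast (by linarith : (2 : ℝ) ≤ N)
  have hle : x / 4 ≤ (N - 2 : ℕ) := by
    rw [Nat.cast_sub hN2]
    push_cast
    linarith
  calc (x / 4) ^ 3 ≤ ((N - 2 : ℕ) : ℝ) ^ 3 := by gcongr
    _ ≤ (N.descFactorial 3 : ℝ) := by exact_mod_cast Nat.pow_sub_le_descFactorial N 3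

lemma descFactorial_card_mul_le_sum_triples {ι : Type*} [Fintype ι] {S : Finset ι}
    {g : ι → ι → ι → ℝ} {p : ℝ} (hg : ∀ a b c, 0 ≤ g a b c)
    (hp : ∀ v : Fin 3 → ι, v.Injective → (∀ s, v s ∈ S) → p ≤ g (v 0) (v 1) (v 2)) :
    (S.card.descFactorial 3 : ℝ) * p ≤ ∑ a, ∑ b, ∑ c, g a b c := by
  let G : ι × ι × ι → ℝ := fun t => g t.1 t.2.1 t.2.2
  let triple : (Fin 3 ↪ S) ↪ ι × ι × ι :=
    ⟨fun e => (e 0, e 1, e 2), fun e e' h => by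
      simp only [Prod.mk.injEq, Subtype.coe_inj] at h
      ext s
      fin_cases s <;> simp [h]⟩
  calc (S.card.descFactorial 3 : ℝ) * p = ∑ _e : Fin 3 ↪ S, p := by
        simp [Fintype.card_embedding_eq]
    _ ≤ ∑ e : Fin 3 ↪ S, G (triple e) := Finset.sum_le_sum fun e _ =>
        hp (fun s => e s) (Subtype.val_injective.comp e.injective) fun s => (e s).2
    _ = ∑ t ∈ univ.map triple, G t := (Finset.sum_map _ _ _).symm
    _ ≤ ∑ t, G t := Finset.sum_le_univ_sum_of_nonneg fun t => hg _ _ _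
    _ = ∑ a, ∑ b, ∑ c, g a b c := by simp only [G, Fintype.sum_prod_type]

end RealAndCounting

section ProductMeasure

variable {X : Type*} [MeasurableSpace X] (ν : Measure X) [IsProbabilityMeasure ν]

lemma measureReal_pi_setOf_forall_mem {ι κ : Type*} [Fintype ι] [Fintype κ] {v : κ → ι}
    (hv : v.Injective) {A : κ → Set X} (hA : ∀ s, MeasurableSet (A s)) :
    (Measure.pi fun _ : ι => ν).real {x | ∀ s, x (v s) ∈ A s} = ∏ s, ν.real (A s) := by
  have hindep : iIndepFun (fun s (x : ι → X) => x (v s)) (Measure.pi fun _ => ν) :=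
    (iIndepFun_pi (X := fun _ => id) fun _ => aemeasurable_id).precomp hv
  have h := hindep.measure_inter_preimage_eq_mul univ (sets := A) fun s _ => hA s
  have heval (s : κ) : (Measure.pi fun _ : ι => ν) ((fun x => x (v s)) ⁻¹' A s) = ν (A s) :=
    (measurePreserving_eval (fun _ => ν) (v s)).measure_preimage (hA s).nullMeasurableSet
  have hset : {x : ι → X | ∀ s, x (v s) ∈ A s} = ⋂ s ∈ univ, (fun x => x (v s)) ⁻¹' A s := by
    ext x; simp
  simp only [measureReal_def, hset, h, heval, ENNReal.toReal_prod]

lemma measureReal_pi_pi_setOf_forall_mem {ι κ : Type*} [Fintype ι] [Fintype κ]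
    (P : Finset (ι × κ)) (A : Set X) :
    (Measure.pi fun _ : ι => Measure.pi fun _ : κ => ν).real {u | ∀ p ∈ P, u p.1 p.2 ∈ A} =
      ν.real A ^ P.card := by
  have hset : {u : ι → κ → X | ∀ p ∈ P, u p.1 p.2 ∈ A} =
      Set.univ.pi fun i => Set.pi {j | (i, j) ∈ P} fun _ => A := by
    ext u; simp [Set.mem_pi]
  have hrow (i : ι) : (Measure.pi fun _ : κ => ν) (Set.pi {j | (i, j) ∈ P} fun _ => A) =
      ν A ^ #{j | (i, j) ∈ P} := by
    simpa using Measure.pi_pi_finset (fun _ : κ => ν) (fun _ => A) {j | (i, j) ∈ P}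
  have hcard : ∑ i, #{j | (i, j) ∈ P} = P.card := by
    simp only [Finset.card_filter, ← Fintype.sum_prod_type' fun i j => if (i, j) ∈ P then 1 else 0]
    simp
  rw [measureReal_def, hset, Measure.pi_pi]
  simp only [hrow, Finset.prod_pow_eq_pow_sum, hcard, ENNReal.toReal_pow, measureReal_def]

end ProductMeasure

section Model

instance : IsProbabilityMeasure unifI := ⟨by simp [unifI]⟩

instance (d : ℕ) : IsProbabilityMeasure (unifCube d) :=
  ⟨by simp [unifCube, Real.volume_Icc_pi]⟩

instance (n d : ℕ) : IsProbabilityMeasure (H1Measure n d) := by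
  unfold H1Measure; infer_instance

lemma measureReal_unifI_Iic {q : ℝ} (hq0 : 0 ≤ q) (hq1 : q ≤ 1) : unifI.real (Set.Iic q) = q := by
  have : Set.Iic q ∩ Set.Icc 0 1 = Set.Icc 0 q := by
    ext x; grind
  simp [unifI, measureReal_restrict_apply measurableSet_Iic, this, hq0]

lemma C1_pos (d : ℕ) {γ : ℝ} (hγ : 1 < γ) : 0 < C1 d γ := by
  have : 0 < γ - 1 := sub_pos.2 hγ
  unfold C1
  positivity

lemma muPar_pos {τ C w0 : ℝ} (hτ : 2 < τ) (hC : 0 < C) (hw0 : 0 < w0) : 0 < muPar τ C w0 := by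
  have : 0 < τ - 1 := by linarith
  have : 0 < τ - 2 := by linarith
  unfold muPar
  positivity

lemma measurable_torusDist {d : ℕ} {α : Type*} [MeasurableSpace α] {f g : α → Fin d → ℝ}
    (hf : Measurable f) (hg : Measurable g) : Measurable fun a => torusDist d (f a) (g a) := by
  unfold torusDist
  refine Measurable.iSup fun i => ?_
  fun_prop

lemma torusDist_le {d : ℕ} {x y : Fin d → ℝ} {δ : ℝ} (hδ : 0 ≤ δ) (h : ∀ i, |x i - y i| ≤ δ) :
    torusDist d x y ≤ δ :=
  Real.iSup_le (fun i => (min_le_left _ _).trans (h i)) hδ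

lemma torusDist_pos {d : ℕ} {x y : Fin d → ℝ} {i : Fin d} (hne : x i ≠ y i)
    (hlt : |x i - y i| < 1) : 0 < torusDist d x y :=
  (lt_min (abs_pos.2 (sub_ne_zero.2 hne)) (sub_pos.2 hlt)).trans_le
    (le_ciSup (f := fun i => min |x i - y i| (1 - |x i - y i|)) (Set.finite_range _).bddAbove i)

variable {n k d : ℕ} {γ μ : ℝ} {w : Fin n → ℝ}

lemma measurable_pH1 (i j : Fin n) : Measurable fun pos => pH1 n k d γ μ w pos i j := by
  unfold pH1 pGIRG
  split_ifs
  · have h : Measurable fun pos : Fin n → Fin d → ℝ => torusDist d (pos i) (pos j) :=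
      measurable_torusDist (measurable_pi_apply i) (measurable_pi_apply j)
    fun_prop
  · exact measurable_const

lemma measurableSet_edgeH1 (i j : Fin n) : MeasurableSet {ω | edgeH1 n k d γ μ w ω i j} :=
  (MeasurableSet.const (i ≠ j)).inter <|
    measurableSet_le (by fun_prop) ((measurable_pH1 i j).comp measurable_fst)

lemma measurableSet_triH1 (a b c : Fin n) : MeasurableSet {ω | triH1 n k d γ μ w ω a b c} :=
  (measurableSet_edgeH1 a b).inter ((measurableSet_edgeH1 b c).inter (measurableSet_edgeH1 c a))

lemma triH1_iff_forall_edgeH1 {ω : H1Space n d} (v : Fin 3 → Fin n) :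
    triH1 n k d γ μ w ω (v 0) (v 1) (v 2) ↔ ∀ s, edgeH1 n k d γ μ w ω (v s) (v (s + 1)) := by
  simp [triH1, Fin.forall_fin_succ]

lemma integral_WH1 :
    ∫ ω, WH1 n k d γ μ w ω ∂(H1Measure n d) =
      ∑ a : Fin n, ∑ b : Fin n, ∑ c : Fin n,
        (H1Measure n d).real {ω | triH1 n k d γ μ w ω a b c} * (w a * w b * w c)⁻¹ := by
  have hsum (ω : H1Space n d) : WH1 n k d γ μ w ω = ∑ t : Fin n × Fin n × Fin n,
      Set.indicator {ω | triH1 n k d γ μ w ω t.1 t.2.1 t.2.2}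
        (fun _ => (w t.1 * w t.2.1 * w t.2.2)⁻¹) ω := by
    simp only [WH1, Set.indicator, Set.mem_ofPred_eq, Fintype.sum_prod_type]
  simp only [hsum]
  rw [integral_finsetSum _ fun t _ => (integrable_const _).indicator (measurableSet_triH1 _ _ _)]
  simp only [integral_indicator_const _ (measurableSet_triH1 _ _ _), smul_eq_mul,
    Fintype.sum_prod_type]

lemma pH1_eq_of_mul_torusDist_pow_le {pos : Fin n → Fin d → ℝ} {i j : Fin n} (hμ : 0 < μ)
    (hi : i.val < k) (hj : j.val < k) (hpos : 0 < torusDist d (pos i) (pos j))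
    (hle : μ * k * torusDist d (pos i) (pos j) ^ d ≤ w i * w j) :
    pH1 n k d γ μ w pos i j = (1 + C1 d γ)⁻¹ := by
  have hk : (0 : ℝ) < k := by exact_mod_cast (Nat.zero_le _).trans_lt hi
  have hone : 1 ≤ w i * w j / (μ * k * torusDist d (pos i) (pos j) ^ d) := by
    rwa [one_le_div (by positivity)]
  rw [pH1, if_pos ⟨hi, hj⟩, pGIRG, min_eq_right hone, Real.one_rpow, mul_one]

end Model

section Grid

/-- The half-open cube `∏ i, [g i / L, (g i + 1) / L)` with index `g` in the grid of mesh
`1 / L`. -/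
def gridCell (d L : ℕ) (g : Fin d → ℕ) : Set (Fin d → ℝ) :=
  Set.univ.pi fun i => Set.Ico ((g i : ℝ) / L) ((g i + 1 : ℝ) / L)

variable {d L : ℕ} {g h : Fin d → ℕ} {x y : Fin d → ℝ}

lemma measurableSet_gridCell : MeasurableSet (gridCell d L g) :=
  MeasurableSet.univ_pi fun _ => measurableSet_Ico

lemma mul_apply_mem_Ico_of_mem_gridCell (hx : x ∈ gridCell d L g) (i : Fin d) :
    L * x i ∈ Set.Ico (g i : ℝ) (g i + 1) := by
  obtain ⟨hge, hlt⟩ := hx i trivial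
  have hL : (0 : ℝ) < L := (Nat.cast_nonneg L).lt_of_ne' fun h => by
    simp only [h, div_zero] at hge hlt
    exact hlt.not_ge hge
  exact ⟨(div_le_iff₀' hL).1 hge, (lt_div_iff₀' hL).1 hlt⟩

lemma apply_eq_of_mem_gridCell (hx : x ∈ gridCell d L g) (hy : y ∈ gridCell d L h) {i : Fin d}
    (hxy : x i = y i) : g i = h i := by
  have hg := mul_apply_mem_Ico_of_mem_gridCell hx i
  have hh := mul_apply_mem_Ico_of_mem_gridCell hy i
  rw [hxy] at hg
  have hlt : (g i : ℝ) < h i + 1 := hg.1.trans_lt hh.2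
  have hgt : (h i : ℝ) < g i + 1 := hh.1.trans_lt hg.2
  norm_cast at hlt hgt
  lia

lemma mul_abs_sub_lt_of_mem_gridCell (hx : x ∈ gridCell d L g) (hy : y ∈ gridCell d L h)
    (i : Fin d) : L * |x i - y i| < |(g i : ℝ) - h i| + 1 := by
  obtain ⟨hx, hx'⟩ := mul_apply_mem_Ico_of_mem_gridCell hx i
  obtain ⟨hy, hy'⟩ := mul_apply_mem_Ico_of_mem_gridCell hy i
  rw [← abs_of_nonneg (Nat.cast_nonneg (α := ℝ) L), ← abs_mul, abs_lt, mul_sub]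
  constructor <;> linarith [le_abs_self ((g i : ℝ) - h i), neg_abs_le ((g i : ℝ) - h i)]

lemma gridCell_subset_Icc (hg : ∀ i, g i < L) : gridCell d L g ⊆ Set.Icc 0 1 := by
  intro x hx
  refine ⟨fun i => le_trans (by positivity) (hx i trivial).1, fun i => ?_⟩
  have hL : (0 : ℝ) < L := by exact_mod_cast (Nat.zero_le _).trans_lt (hg i)
  exact (hx i trivial).2.le.trans ((div_le_one hL).2 (by exact_mod_cast hg i))

lemma measureReal_unifCube_gridCell (hg : ∀ i, g i < L) :
    (unifCube d).real (gridCell d L g) = ((L : ℝ) ^ d)⁻¹ := by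
  rw [unifCube, measureReal_restrict_apply measurableSet_gridCell,
    Set.inter_eq_left.2 (gridCell_subset_Icc hg), gridCell, measureReal_def,
    Real.volume_pi_Ico_toReal fun i => by gcongr; linarith]
  simp [← sub_div]

/-- The set of positions for which, for every `s < r`, the vertex `v s` lies in the `s`-th of the
`r` diagonal subcells (of mesh `1 / (r m)`) of the cell `f` of the grid of mesh `1 / m`. -/
def clusterSet {V : Type*} {r : ℕ} (d m : ℕ) (v : Fin r → V) (f : Fin d → Fin m) :
    Set (V → Fin d → ℝ) :=
  {pos | ∀ s : Fin r, pos (v s) ∈ gridCell d (r * m) fun i => r * f i + s}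

variable {V : Type*} {r m : ℕ} {v : Fin r → V} {f : Fin d → Fin m} {pos : V → Fin d → ℝ}

lemma measurableSet_clusterSet : MeasurableSet (clusterSet d m v f) := by
  rw [clusterSet, Set.ofPred_forall]
  exact MeasurableSet.iInter fun s => measurable_pi_apply (v s) measurableSet_gridCell

lemma measureReal_clusterSet [Fintype V] (hv : v.Injective) :
    (Measure.pi fun _ : V => unifCube d).real (clusterSet d m v f) = (((r * m : ℝ) ^ d)⁻¹) ^ r := by
  have hlt (s : Fin r) (i : Fin d) : r * (f i : ℕ) + s < r * m :=
    calc r * (f i : ℕ) + s < r * (f i + 1) := by rw [mul_add_one]; gcongr; exact s.2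
      _ ≤ r * m := by gcongr; exact (f i).2
  rw [clusterSet, measureReal_pi_setOf_forall_mem _ hv fun _ => measurableSet_gridCell]
  simp [measureReal_unifCube_gridCell (hlt _)]

lemma pairwise_disjoint_clusterSet (hr : 0 < r) (v : Fin r → V) :
    Pairwise (Function.onFun Disjoint (clusterSet d m v)) := by
  refine fun f f' hne => Set.disjoint_left.2 fun pos hf hf' => hne (funext fun i => ?_)
  have hi := apply_eq_of_mem_gridCell (hf ⟨0, hr⟩) (hf' ⟨0, hr⟩) (rfl : pos (v ⟨0, hr⟩) i = _)
  exact Fin.ext (by simpa [hr.ne'] using hi)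

lemma measureReal_iUnion_clusterSet [Fintype V] (hr : 0 < r) (hv : v.Injective) :
    (Measure.pi fun _ : V => unifCube d).real (⋃ f, clusterSet d m v f) =
      m ^ d * (((r * m : ℝ) ^ d)⁻¹) ^ r := by
  rw [measureReal_iUnion_fintype (pairwise_disjoint_clusterSet hr v)
    fun _ => measurableSet_clusterSet]
  simp [measureReal_clusterSet hv]

lemma abs_sub_lt_of_mem_clusterSet (hpos : pos ∈ clusterSet d m v f) (s t : Fin r) (i : Fin d) :
    |pos (v s) i - pos (v t) i| < (m : ℝ)⁻¹ := by
  have hm : (0 : ℝ) < m := by exact_mod_cast (Nat.zero_le _).trans_lt (f i).2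
  have hr : (0 : ℝ) < r := by exact_mod_cast (Nat.zero_le _).trans_lt s.2
  have hdiff : |(s : ℝ) - t| ≤ r - 1 := by
    have hs : (s : ℝ) + 1 ≤ r := by exact_mod_cast s.2
    have ht : (t : ℝ) + 1 ≤ r := by exact_mod_cast t.2
    have : (0 : ℝ) ≤ s := Nat.cast_nonneg _
    have : (0 : ℝ) ≤ t := Nat.cast_nonneg _
    rw [abs_le]
    constructor <;> linarith
  have hcell := mul_abs_sub_lt_of_mem_gridCell (hpos s) (hpos t) i
  push_cast at hcell
  rw [add_sub_add_left_eq_sub, mul_assoc] at hcell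
  rw [← one_div, lt_div_iff₀' hm]
  exact lt_of_mul_lt_mul_left (by linarith) hr.le

lemma apply_ne_of_mem_clusterSet (hpos : pos ∈ clusterSet d m v f) {s t : Fin r} (hst : s ≠ t)
    (i : Fin d) : pos (v s) i ≠ pos (v t) i := fun h =>
  hst (Fin.ext (Nat.add_left_cancel (apply_eq_of_mem_gridCell (hpos s) (hpos t) h)))

lemma torusDist_le_of_mem_clusterSet (hpos : pos ∈ clusterSet d m v f) (s t : Fin r) :
    torusDist d (pos (v s)) (pos (v t)) ≤ (m : ℝ)⁻¹ :=
  torusDist_le (by positivity) fun i => (abs_sub_lt_of_mem_clusterSet hpos s t i).le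

lemma torusDist_pos_of_mem_clusterSet (hd : 1 ≤ d) (hpos : pos ∈ clusterSet d m v f)
    {s t : Fin r} (hst : s ≠ t) : 0 < torusDist d (pos (v s)) (pos (v t)) := by
  let i : Fin d := ⟨0, hd⟩
  have hm : (1 : ℝ) ≤ m := by exact_mod_cast (Nat.zero_le _).trans_lt (f i).2
  exact torusDist_pos (apply_ne_of_mem_clusterSet hpos hst i)
    ((abs_sub_lt_of_mem_clusterSet hpos s t i).trans_le (inv_le_one_of_one_le₀ hm))

end Grid

section Triangles

variable {n k d m : ℕ} {γ μ w0 M : ℝ} {w : Fin n → ℝ} {v : Fin 3 → Fin n}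

lemma pH1_eq_of_mem_clusterSet {r : ℕ} {v : Fin r → Fin n} {f : Fin d → Fin m}
    {pos : Fin n → Fin d → ℝ} (hd : 1 ≤ d) (hw0 : 0 < w0) (hμ : 0 < μ)
    (hm : μ * k ≤ w0 ^ 2 * (m : ℝ) ^ d) (hw : ∀ i, w0 ≤ w i) (hvk : ∀ s, (v s).val < k)
    (hpos : pos ∈ clusterSet d m v f) {s t : Fin r} (hst : s ≠ t) :
    pH1 n k d γ μ w pos (v s) (v t) = (1 + C1 d γ)⁻¹ := by
  have hdist := torusDist_pos_of_mem_clusterSet hd hpos hst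
  have hm0 : (m : ℝ) ≠ 0 := by exact_mod_cast ((Nat.zero_le _).trans_lt (f ⟨0, hd⟩).2).ne'
  refine pH1_eq_of_mul_torusDist_pow_le hμ (hvk s) (hvk t) hdist ?_
  calc μ * k * torusDist d (pos (v s)) (pos (v t)) ^ d
      ≤ (w0 ^ 2 * (m : ℝ) ^ d) * ((m : ℝ)⁻¹) ^ d := by
        gcongr
        exact torusDist_le_of_mem_clusterSet hpos s t
    _ = w0 * w0 := by rw [mul_assoc, ← mul_pow, mul_inv_cancel₀ hm0, one_pow]; ring
    _ ≤ w (v s) * w (v t) := mul_le_mul (hw _) (hw _) hw0.le (hw0.le.trans (hw _))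

/-- The event that the uniform variables attached to the three pairs of vertices among `v 0`,
`v 1`, `v 2` are all at most `q`. -/
def closingSet (v : Fin 3 → Fin n) (q : ℝ) : Set (Fin n → Fin n → ℝ) :=
  {u | ∀ s, u (min (v s) (v (s + 1))) (max (v s) (v (s + 1))) ≤ q}

lemma pow_three_le_measureReal_closingSet {q : ℝ} (hq0 : 0 ≤ q) (hq1 : q ≤ 1) :
    q ^ 3 ≤ (Measure.pi fun _ : Fin n => Measure.pi fun _ : Fin n => unifI).real
      (closingSet v q) := by
  let slot (s : Fin 3) : Fin n × Fin n := (min (v s) (v (s + 1)), max (v s) (v (s + 1)))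
  have hset : closingSet v q = {u | ∀ p ∈ univ.image slot, u p.1 p.2 ∈ Set.Iic q} := by
    ext u; simp [closingSet, slot]
  rw [hset, measureReal_pi_pi_setOf_forall_mem, measureReal_unifI_Iic hq0 hq1]
  exact pow_le_pow_of_le_one hq0 hq1 card_image_le

lemma iUnion_clusterSet_prod_closingSet_subset_triH1 (hd : 1 ≤ d) (hw0 : 0 < w0) (hμ : 0 < μ)
    (hm : μ * k ≤ w0 ^ 2 * (m : ℝ) ^ d) (hw : ∀ i, w0 ≤ w i) (hv : v.Injective)
    (hvk : ∀ s, (v s).val < k) :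
    (⋃ f, clusterSet d m v f) ×ˢ closingSet v (1 + C1 d γ)⁻¹ ⊆
      {ω | triH1 n k d γ μ w ω (v 0) (v 1) (v 2)} := by
  rintro ⟨pos, u⟩ ⟨hpos, hu⟩
  obtain ⟨f, hf⟩ := Set.mem_iUnion.1 hpos
  refine (triH1_iff_forall_edgeH1 v).2 fun s => ?_
  have hs : s ≠ s + 1 := by revert s; decide
  refine ⟨hv.ne hs, ?_⟩
  rw [pH1_eq_of_mem_clusterSet hd hw0 hμ hm hw hvk hf hs]
  exact hu s

lemma le_measureReal_triH1_of_le_pow (hd : 1 ≤ d) (hγ : 1 < γ) (hw0 : 0 < w0) (hμ : 0 < μ)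
    (hm : μ * k ≤ w0 ^ 2 * (m : ℝ) ^ d) (hw : ∀ i, w0 ≤ w i) (hv : v.Injective)
    (hvk : ∀ s, (v s).val < k) :
    (m : ℝ) ^ d * (((3 * m : ℝ) ^ d)⁻¹) ^ 3 * (1 + C1 d γ)⁻¹ ^ 3 ≤
      (H1Measure n d).real {ω | triH1 n k d γ μ w ω (v 0) (v 1) (v 2)} := by
  have hC1 := C1_pos d hγ
  have hq0 : 0 ≤ (1 + C1 d γ)⁻¹ := by positivity
  have hq1 : (1 + C1 d γ)⁻¹ ≤ 1 := inv_le_one_of_one_le₀ (by linarith)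
  calc (m : ℝ) ^ d * (((3 * m : ℝ) ^ d)⁻¹) ^ 3 * (1 + C1 d γ)⁻¹ ^ 3
      ≤ (Measure.pi fun _ : Fin n => unifCube d).real (⋃ f, clusterSet d m v f) *
          (Measure.pi fun _ : Fin n => Measure.pi fun _ : Fin n => unifI).real
            (closingSet v (1 + C1 d γ)⁻¹) := by
        rw [measureReal_iUnion_clusterSet three_pos hv, Nat.cast_ofNat]
        gcongr
        exact pow_three_le_measureReal_closingSet hq0 hq1
    _ = (H1Measure n d).real ((⋃ f, clusterSet d m v f) ×ˢ closingSet v (1 + C1 d γ)⁻¹) :=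
        (measureReal_prod_prod _ _).symm
    _ ≤ (H1Measure n d).real {ω | triH1 n k d γ μ w ω (v 0) (v 1) (v 2)} :=
        measureReal_mono
          (iUnion_clusterSet_prod_closingSet_subset_triH1 hd hw0 hμ hm hw hv hvk)

/-- The factor `108 = 3³ · 2²` per dimension is lost to the three subcells and to rounding the grid
size `m` up to an integer. -/
lemma le_measureReal_triH1 (hd : 1 ≤ d) (hγ : 1 < γ) (hw0 : 0 < w0) (hμ : 0 < μ)
    (hk : w0 ^ 2 ≤ μ * k) (hw : ∀ i, w0 ≤ w i) (hv : v.Injective) (hvk : ∀ s, (v s).val < k) :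
    (w0 ^ 2 / (μ * k)) ^ 2 * (1 + C1 d γ)⁻¹ ^ 3 / 108 ^ d ≤
      (H1Measure n d).real {ω | triH1 n k d γ μ w ω (v 0) (v 1) (v 2)} := by
  have hC1 := C1_pos d hγ
  have ht : 1 ≤ μ * k / w0 ^ 2 := (one_le_div (by positivity)).2 hk
  obtain ⟨m, hle, hge⟩ := exists_natCast_pow_mem_Icc (by lia : d ≠ 0) ht
  have hm : 0 < (m : ℝ) ^ d := by linarith
  have hmk : μ * k ≤ w0 ^ 2 * (m : ℝ) ^ d := (div_le_iff₀' (by positivity)).1 hle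
  refine le_trans ?_ (le_measureReal_triH1_of_le_pow hd hγ hw0 hμ hmk hw hv hvk)
  calc (w0 ^ 2 / (μ * k)) ^ 2 * (1 + C1 d γ)⁻¹ ^ 3 / 108 ^ d
      = ((2 ^ d * (μ * k / w0 ^ 2)) ^ 2)⁻¹ * (1 + C1 d γ)⁻¹ ^ 3 / 27 ^ d := by
        rw [show (108 : ℝ) = 2 ^ 2 * 27 by norm_num, mul_pow, mul_pow, ← pow_mul,
          ← pow_mul, mul_comm 2 d]
        field_simp
    _ ≤ (((m : ℝ) ^ d) ^ 2)⁻¹ * (1 + C1 d γ)⁻¹ ^ 3 / 27 ^ d := by gcongr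
    _ = (m : ℝ) ^ d * (((3 * m : ℝ) ^ d)⁻¹) ^ 3 * (1 + C1 d γ)⁻¹ ^ 3 := by
        rw [show (27 : ℝ) = 3 ^ 3 by norm_num, mul_pow, ← pow_mul 3, mul_comm 3 d, pow_mul]
        field_simp

lemma descFactorial_card_mul_le_integral_WH1 (hd : 1 ≤ d) (hγ : 1 < γ) (hw0 : 0 < w0)
    (hμ : 0 < μ) (hk : w0 ^ 2 ≤ μ * k) (hw : ∀ i, w0 ≤ w i) :
    ((#{i : Fin n | i.val < k ∧ w i ≤ M}).descFactorial 3 : ℝ) *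
        ((w0 ^ 2 / (μ * k)) ^ 2 * (1 + C1 d γ)⁻¹ ^ 3 / 108 ^ d * (M ^ 3)⁻¹) ≤
      ∫ ω, WH1 n k d γ μ w ω ∂(H1Measure n d) := by
  have hwpos (i : Fin n) : 0 < w i := hw0.trans_le (hw i)
  rw [integral_WH1]
  refine descFactorial_card_mul_le_sum_triples (fun a b c => ?_) fun v hv hvS => ?_
  · have := hwpos a
    have := hwpos b
    have := hwpos c
    positivity
  · have hvk (s : Fin 3) : (v s).val < k := ((mem_filter_univ _).1 (hvS s)).1
    have hvM (s : Fin 3) : w (v s) ≤ M := ((mem_filter_univ _).1 (hvS s)).2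
    have h0 := hwpos (v 0)
    have h1 := hwpos (v 1)
    have h2 := hwpos (v 2)
    have hM : 0 < M := h0.trans_le (hvM 0)
    gcongr
    · exact le_measureReal_triH1 hd hγ hw0 hμ hk hw hv hvk
    · calc w (v 0) * w (v 1) * w (v 2) ≤ M * M * M := by
            gcongr <;> apply hvM
        _ = M ^ 3 := by ring

end Triangles

section Tail

variable {τ C w0 : ℝ} {k : ℕ → ℕ} {w : (n : ℕ) → Fin n → ℝ}

lemma Assumption2.tendsto_card_lt_div (hA2 : Assumption2 τ C w0 k w) (hτ : 1 < τ)
    (hk : Tendsto k atTop atTop) {x : ℝ} (hx : w0 ≤ x) :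
    Tendsto (fun n => (#{i : Fin n | i.val < k n ∧ x < w n i} : ℝ) / k n) atTop
      (𝓝 (C * x ^ (1 - τ))) := by
  set L := C * x ^ (1 - τ)
  rw [Metric.tendsto_nhds]
  intro δ hδ
  obtain ⟨N, hN⟩ := hA2 1 one_pos (δ / (|L| + 1)) (by positivity)
  have hrange : ∀ᶠ n in atTop, x ≤ 1 * (k n : ℝ) ^ ((1 : ℝ) / (τ - 1)) / Real.log (k n) := by
    simp only [one_mul]
    exact ((tendsto_rpow_div_log_atTop (one_div_pos.2 (sub_pos.2 hτ))).comp
      (tendsto_natCast_atTop_atTop.comp hk)).eventually_ge_atTop x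
  filter_upwards [hrange, eventually_ge_atTop N] with n hxn hn
  calc |(#{i : Fin n | i.val < k n ∧ x < w n i} : ℝ) / k n - L|
      ≤ δ / (|L| + 1) * L := hN n hn x hx hxn
    _ ≤ δ / (|L| + 1) * |L| := by gcongr; exact le_abs_self L
    _ < δ / (|L| + 1) * (|L| + 1) := by gcongr; linarith
    _ = δ := by field_simp

lemma Assumption2.exists_half_le_card_le (hA2 : Assumption2 τ C w0 k w) (hτ : 1 < τ)
    (hkn : ∀ n, k n ≤ n) (hk : Tendsto k atTop atTop) :
    ∃ M > 0, ∀ᶠ n in atTop, (k n : ℝ) / 2 ≤ #{i : Fin n | i.val < k n ∧ w n i ≤ M} := by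
  have hlim : Tendsto (fun x : ℝ => C * x ^ (1 - τ)) atTop (𝓝 0) := by
    simpa using (tendsto_rpow_neg_atTop (sub_pos.2 hτ)).const_mul C
  obtain ⟨M, hMtail, hMw0, hM0⟩ := ((hlim.eventually_lt_const one_half_pos).and
    ((eventually_ge_atTop w0).and (eventually_gt_atTop 0))).exists
  refine ⟨M, hM0, ?_⟩
  filter_upwards [(hA2.tendsto_card_lt_div hτ hk hMw0).eventually_lt_const hMtail,
    hk.eventually_gt_atTop 0] with n htail hk0
  have hheavy : (#{i : Fin n | i.val < k n ∧ M < w n i} : ℝ) < 1 / 2 * k n :=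
    (div_lt_iff₀ (by exact_mod_cast hk0)).1 htail
  have hsplit : (#{i : Fin n | i.val < k n ∧ w n i ≤ M} : ℝ) +
      #{i : Fin n | i.val < k n ∧ M < w n i} = k n := by
    have := card_filter_add_card_filter_not (s := {i : Fin n | i.val < k n}) (fun i => w n i ≤ M)
    simp only [filter_filter, not_le, Fin.card_filter_val_lt, min_eq_right (hkn n)] at this
    exact_mod_cast this
  linarith

end Tail

theorem expected_weighted_triangles_H1_general {τ C w0 γ μ : ℝ} {d : ℕ} {k : ℕ → ℕ}
    {w : (n : ℕ) → Fin n → ℝ} (hτ : 1 < τ) (hw0 : 0 < w0) (hγ : 1 < γ) (hμ : 0 < μ) (hd : 1 ≤ d)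
    (hkn : ∀ n, k n ≤ n) (hk : Tendsto k atTop atTop) (hw : ∀ n i, w0 ≤ w n i)
    (hA2 : Assumption2 τ C w0 k w) :
    ∃ c > 0, ∀ᶠ n in atTop, c * (k n : ℝ) ≤ ∫ ω, WH1 n (k n) d γ μ (w n) ω ∂(H1Measure n d) := by
  have hC1 := C1_pos d hγ
  obtain ⟨M, hM0, hM⟩ := hA2.exists_half_le_card_le hτ hkn hk
  have hkR : Tendsto (fun n => (k n : ℝ)) atTop atTop := tendsto_natCast_atTop_atTop.comp hk
  refine ⟨(w0 ^ 2 / μ) ^ 2 * (1 + C1 d γ)⁻¹ ^ 3 / 108 ^ d * (M ^ 3)⁻¹ / 64, by positivity, ?_⟩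
  filter_upwards [hM, hkR.eventually_ge_atTop 8, hkR.eventually_ge_atTop (w0 ^ 2 / μ)]
    with n hcard hk8 hkw0
  have : (0 : ℝ) < k n := by linarith
  calc (w0 ^ 2 / μ) ^ 2 * (1 + C1 d γ)⁻¹ ^ 3 / 108 ^ d * (M ^ 3)⁻¹ / 64 * k n
      = (k n / 4) ^ 3 *
          ((w0 ^ 2 / (μ * k n)) ^ 2 * (1 + C1 d γ)⁻¹ ^ 3 / 108 ^ d * (M ^ 3)⁻¹) := by
        field_simp
        norm_num
    _ ≤ ((#{i : Fin n | i.val < k n ∧ w n i ≤ M}).descFactorial 3 : ℝ) *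
          ((w0 ^ 2 / (μ * k n)) ^ 2 * (1 + C1 d γ)⁻¹ ^ 3 / 108 ^ d * (M ^ 3)⁻¹) := by
        gcongr
        exact div_four_pow_three_le_descFactorial hk8 hcard
    _ ≤ ∫ ω, WH1 n (k n) d γ μ (w n) ω ∂(H1Measure n d) :=
        descFactorial_card_mul_le_integral_WH1 hd hγ hw0 hμ ((div_le_iff₀' hμ).1 hkw0) (hw n)

/-- Proposition 5.4 (expectation): under `H₁` with `k → ∞`, `k = o(n)`, the expected
weighted triangle statistic satisfies `E₁[W] = Ω(k)`. -/
theorem expected_weighted_triangles_H1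
    (τ C w0 : ℝ) (hτ1 : 2 < τ) (hτ2 : τ < 3) (hC : 0 < C) (hw0 : 0 < w0)
    (hCw : C = w0 ^ (τ - 1))
    (γ : ℝ) (hγ : 1 < γ) (d : ℕ) (hd : 1 ≤ d)
    (k : ℕ → ℕ) (hkn : ∀ n, k n ≤ n)
    (hko : (fun n : ℕ => (k n : ℝ)) =o[atTop] fun n : ℕ => (n : ℝ))
    (hkinf : Tendsto (fun n => k n) atTop atTop)
    (w : (n : ℕ) → Fin n → ℝ) (hww0 : ∀ n (i : Fin n), w0 ≤ w n i)
    (hA1 : Assumption1 τ C w0 w)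
    (hA2 : Assumption2 τ C w0 k w)
    :
    ∃ c > (0:ℝ), ∀ᶠ n in atTop,
      c * (k n : ℝ) ≤ ∫ ω, WH1 n (k n) d γ (muPar τ C w0) (w n) ω ∂(H1Measure n d) := by
  exact expected_weighted_triangles_H1_general (by linarith) hw0 hγ (muPar_pos hτ1 hC hw0) hd
    hkn hkinf hww0 hA2
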